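/- Let h : V → ℝ be positive and ρ ∈ ℝ with ρ ≠ 0. Then J_ρ attains its infimum over H = {u : V → ℝ : ∫_V u dμ = 0} at some u ∈ H, and this minimizer u solves the fractional mean field equation Lu(x) = ρ( h(x)e^{u(x)} / ∫_V h e^u dμ − 1/|V| ) for every x ∈ V. -/

import Mathlib

open Real Finset

variable {V : Type*}

/-- Discrete integral: `∫_V f dμ = Σ_x μ(x) f(x)`. -/
noncomputable def intV [Fintype V] (μ f : V → ℝ) : ℝ := ∑ x, μ x * f x

/-- Volume `|V| = Σ_x μ(x)`. -/
noncomputable def volV [Fintype V] (μ : V → ℝ) : ℝ := ∑ x, μ x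

/-- The nonlocal (fractional graph Laplacian type) operator
`Lu(x) = (1/μ(x)) Σ_{y ≠ x} W(x,y)(u(x) − u(y))`. -/
noncomputable def opL [Fintype V] [DecidableEq V] (μ : V → ℝ) (W : V → V → ℝ)
    (u : V → ℝ) (x : V) : ℝ :=
  (1 / μ x) * ∑ y ∈ univ.filter (fun y => y ≠ x), W x y * (u x - u y)

/-- Gradient form `∇u·∇v(x) = (1/(2μ(x))) Σ_{y ≠ x} W(x,y)(u(x)−u(y))(v(x)−v(y))`. -/
noncomputable def gradForm [Fintype V] [DecidableEq V] (μ : V → ℝ) (W : V → V → ℝ)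
    (u v : V → ℝ) (x : V) : ℝ :=
  (1 / (2 * μ x)) * ∑ y ∈ univ.filter (fun y => y ≠ x), W x y * (u x - u y) * (v x - v y)

/-- `|∇u|²(x) = ∇u·∇u(x)`. -/
noncomputable def gradSq [Fintype V] [DecidableEq V] (μ : V → ℝ) (W : V → V → ℝ)
    (u : V → ℝ) (x : V) : ℝ := gradForm μ W u u x


/-- The mean field functional `J_ρ(u) = (1/2) ∫_V |∇u|² dμ − ρ log ∫_V h e^u dμ`. -/
noncomputable def Jrho [Fintype V] [DecidableEq V] (μ : V → ℝ) (W : V → V → ℝ)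
    (h : V → ℝ) (ρ : ℝ) (u : V → ℝ) : ℝ :=
  (1 / 2) * intV μ (gradSq μ W u) - ρ * Real.log (intV μ (fun x => h x * Real.exp (u x)))

open Filter

/-! The energy `∫ |∇u|² dμ` is 2-homogeneous and, on a connected weighted graph, positive on nonzero
mean-zero functions, so by compactness of the unit sphere it dominates `‖u‖²` there (a Poincaré
inequality). As `log ∫ h eᵘ dμ` is 1-Lipschitz in the sup norm, `J_ρ` is coercive on the mean-zero
space and attains its minimum. At a minimizer `u`, Green's formula turns the vanishing of the first
variation into the statement that `Lu - ρ h eᵘ / ∫ h eᵘ dμ` is orthogonal to all mean-zero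
functions, hence constant; the constant is its mean, `-ρ / |V|`, because `∫ Lu dμ = 0`. -/

theorem exists_pos_forall_mul_norm_sq_le {E : Type*} [NormedAddCommGroup E] [NormedSpace ℝ E]
    [ProperSpace E] {F : E → ℝ} (hF : Continuous F)
    (hsmul : ∀ (r : ℝ) (u : E), F (r • u) = r ^ 2 * F u) (hpos : ∀ u, u ≠ 0 → 0 < F u) :
    ∃ c > 0, ∀ u, c * ‖u‖ ^ 2 ≤ F u := by
  obtain ⟨c, hc, hcF⟩ := (isCompact_sphere (0 : E) 1).exists_forall_le' hF.continuousOn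
    fun u hu => hpos u (ne_zero_of_mem_unit_sphere ⟨u, hu⟩)
  refine ⟨c, hc, fun u => ?_⟩
  rcases eq_or_ne u 0 with rfl | hu
  · have hF0 : F 0 = 0 := by simpa using hsmul 0 0
    simp [hF0]
  · have hnorm : 0 < ‖u‖ := norm_pos_iff.2 hu
    calc c * ‖u‖ ^ 2 ≤ F (‖u‖⁻¹ • u) * ‖u‖ ^ 2 := by
          gcongr
          exact hcF _ (by simp [norm_smul, hnorm.ne'])
      _ = F u := by
          rw [hsmul]
          field_simp

section Integral

variable [Fintype V] {μ f g : V → ℝ}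

theorem intV_add (μ f g : V → ℝ) : intV μ (f + g) = intV μ f + intV μ g :=
  dotProduct_add μ f g

theorem intV_sub (μ f g : V → ℝ) : intV μ (f - g) = intV μ f - intV μ g :=
  dotProduct_sub μ f g

theorem intV_smul (μ : V → ℝ) (r : ℝ) (f : V → ℝ) : intV μ (r • f) = r * intV μ f :=
  dotProduct_smul r μ f

theorem intV_const (μ : V → ℝ) (a : ℝ) : intV μ (fun _ => a) = volV μ * a :=
  (sum_mul univ μ a).symm

theorem volV_pos [Nonempty V] (hμ : ∀ x, 0 < μ x) : 0 < volV μ :=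
  sum_pos (fun x _ => hμ x) univ_nonempty

theorem intV_mono (hμ : ∀ x, 0 ≤ μ x) (hfg : f ≤ g) : intV μ f ≤ intV μ g :=
  dotProduct_le_dotProduct_of_nonneg_left hfg hμ

theorem intV_pos (hμ : ∀ x, 0 < μ x) (hf : 0 < f) : 0 < intV μ f := by
  obtain ⟨hf₀, x, hx⟩ := Pi.lt_def.1 hf
  exact sum_pos' (fun y _ => mul_nonneg (hμ y).le (hf₀ y)) ⟨x, mem_univ x, mul_pos (hμ x) hx⟩

theorem intV_mul_self_eq_zero (hμ : ∀ x, 0 < μ x) : intV μ (f * f) = 0 ↔ f = 0 := by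
  simp only [intV, Pi.mul_apply]
  rw [sum_eq_zero_iff_of_nonneg fun x _ => mul_nonneg (hμ x).le (mul_self_nonneg (f x))]
  simp [funext_iff, (hμ _).ne']

/-- The space `H` of functions with `∫_V u dμ = 0` over which `J_ρ` is minimized. -/
def meanZero (μ : V → ℝ) : Submodule ℝ (V → ℝ) where
  carrier := {u | intV μ u = 0}
  zero_mem' := dotProduct_zero μ
  add_mem' {u v} hu hv := (intV_add μ u v).trans (by rw [hu.out, hv.out, add_zero])
  smul_mem' r u hu := (intV_smul μ r u).trans (by rw [hu.out, mul_zero])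

theorem mem_meanZero : f ∈ meanZero μ ↔ intV μ f = 0 := Iff.rfl

theorem sub_mean_mem_meanZero (hvol : volV μ ≠ 0) (f : V → ℝ) :
    f - (fun _ => intV μ f / volV μ) ∈ meanZero μ := by
  rw [mem_meanZero, intV_sub, intV_const, mul_div_cancel₀ _ hvol, sub_self]

theorem eq_mean_of_forall_intV_mul_eq_zero (hμ : ∀ x, 0 < μ x)
    (hf : ∀ v ∈ meanZero μ, intV μ (f * v) = 0) (x : V) : f x = intV μ f / volV μ := by
  have : Nonempty V := ⟨x⟩
  set a : ℝ := intV μ f / volV μ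
  set v : V → ℝ := f - fun _ => a
  have hv_mem : v ∈ meanZero μ := sub_mean_mem_meanZero (volV_pos hμ).ne' f
  have hvv : intV μ (v * v) = 0 := by
    calc intV μ (v * v) = intV μ (f * v) - a * intV μ v := by
          rw [← intV_smul, ← intV_sub]
          exact congrArg (intV μ) (sub_mul f _ v)
      _ = 0 := by rw [hf v hv_mem, mem_meanZero.1 hv_mem, mul_zero, sub_zero]
  exact sub_eq_zero.1 (congrFun ((intV_mul_self_eq_zero hμ).1 hvv) x)

end Integral

/-- The graph joining distinct points with positive weight: complete for the fractional Laplacian,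
the underlying graph for the usual graph Laplacian. The relation is symmetrized, so that `W` itself
need not be symmetric. -/
def weightGraph (W : V → V → ℝ) : SimpleGraph V :=
  SimpleGraph.fromRel fun x y => 0 < W x y

theorem weightGraph_eq_top {W : V → V → ℝ} (hW : ∀ x y, x ≠ y → 0 < W x y) :
    weightGraph W = ⊤ := by
  ext x y
  simpa [weightGraph] using fun hxy => Or.inl (hW x y hxy)

section Energy

variable [Fintype V] [DecidableEq V] {μ : V → ℝ} {W : V → V → ℝ}

theorem mul_opL {x : V} (hx : μ x ≠ 0) (W : V → V → ℝ) (u : V → ℝ) :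
    μ x * opL μ W u x = ∑ y, W x y * (u x - u y) := by
  rw [opL, sum_filter_of_ne fun y _ hy => by rintro rfl; simp at hy]
  field_simp

theorem intV_gradForm (hμ : ∀ x, μ x ≠ 0) (W : V → V → ℝ) (u v : V → ℝ) :
    intV μ (gradForm μ W u v) =
      1 / 2 * ∑ x, ∑ y, W x y * (u x - u y) * (v x - v y) := by
  rw [intV, mul_sum]
  refine sum_congr rfl fun x _ => ?_
  have hx := hμ x
  rw [gradForm, sum_filter_of_ne fun y _ hy => by rintro rfl; simp at hy]
  field_simp

theorem intV_gradSq_smul (μ : V → ℝ) (W : V → V → ℝ) (r : ℝ) (u : V → ℝ) :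
    intV μ (gradSq μ W (r • u)) = r ^ 2 * intV μ (gradSq μ W u) := by
  simp only [intV, gradSq, gradForm, mul_sum, Pi.smul_apply, smul_eq_mul]
  exact sum_congr rfl fun x _ => sum_congr rfl fun y _ => by ring

theorem intV_gradForm_eq_intV_opL_mul (hμ : ∀ x, μ x ≠ 0) (hW : ∀ x y, W x y = W y x)
    (u v : V → ℝ) : intV μ (gradForm μ W u v) = intV μ (opL μ W u * v) := by
  have hswap : ∑ x, ∑ y, W x y * (u x - u y) * v y = -∑ x, ∑ y, W x y * (u x - u y) * v x := by
    rw [sum_comm]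
    simp only [← sum_neg_distrib]
    exact sum_congr rfl fun x _ => sum_congr rfl fun y _ => by rw [hW y x]; ring
  calc intV μ (gradForm μ W u v)
      = 1 / 2 * (∑ x, ∑ y, W x y * (u x - u y) * v x
          - ∑ x, ∑ y, W x y * (u x - u y) * v y) := by
        simp only [intV_gradForm hμ, mul_sub (W _ _ * _), sum_sub_distrib]
    _ = ∑ x, ∑ y, W x y * (u x - u y) * v x := by rw [hswap]; ring
    _ = intV μ (opL μ W u * v) := by
        simp only [intV, Pi.mul_apply, ← mul_assoc, mul_opL (hμ _), sum_mul]

theorem intV_opL (hμ : ∀ x, μ x ≠ 0) (hW : ∀ x y, W x y = W y x) (u : V → ℝ) :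
    intV μ (opL μ W u) = 0 := by
  rw [← mul_one (opL μ W u), ← intV_gradForm_eq_intV_opL_mul hμ hW, intV_gradForm hμ]
  simp

theorem eq_of_intV_gradSq_eq_zero (hμ : ∀ x, μ x ≠ 0) (hW : ∀ x y, x ≠ y → 0 ≤ W x y)
    (hconn : (weightGraph W).Preconnected) {u : V → ℝ} (hu : intV μ (gradSq μ W u) = 0)
    (x y : V) : u x = u y := by
  have hterm (a b : V) : 0 ≤ W a b * (u a - u b) * (u a - u b) := by
    rcases eq_or_ne a b with rfl | hab
    · simp
    · rw [mul_assoc]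
      exact mul_nonneg (hW a b hab) (mul_self_nonneg _)
  have hsum : ∑ a, ∑ b, W a b * (u a - u b) * (u a - u b) = 0 := by
    have hform := (intV_gradForm hμ W u u).symm.trans hu
    linarith
  have hzero (a b : V) : W a b * (u a - u b) * (u a - u b) = 0 := by
    have ha := (sum_eq_zero_iff_of_nonneg fun a _ => sum_nonneg fun b _ => hterm a b).1 hsum a
      (mem_univ a)
    exact (sum_eq_zero_iff_of_nonneg fun b _ => hterm a b).1 ha b (mem_univ b)
  have hedge {a b : V} (hab : 0 < W a b) : u a = u b := by
    simpa [hab.ne', sub_eq_zero] using hzero a b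
  obtain ⟨p⟩ := hconn x y
  induction p with
  | nil => rfl
  | cons hadj _ ih =>
    obtain ⟨-, hab | hba⟩ := (SimpleGraph.fromRel_adj _ _ _).1 hadj
    · exact (hedge hab).trans ih
    · exact (hedge hba).symm.trans ih

theorem intV_gradSq_nonneg (hμ : ∀ x, 0 ≤ μ x) (hW : ∀ x y, x ≠ y → 0 ≤ W x y) (u : V → ℝ) :
    0 ≤ intV μ (gradSq μ W u) := by
  refine sum_nonneg fun x _ => mul_nonneg (hμ x) (mul_nonneg ?_ (sum_nonneg fun y hy => ?_))
  · exact one_div_nonneg.2 (mul_nonneg zero_le_two (hμ x))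
  · rw [mul_assoc]
    exact mul_nonneg (hW x y (mem_filter.1 hy).2.symm) (mul_self_nonneg _)

theorem intV_gradSq_pos (hμ : ∀ x, 0 < μ x) (hW : ∀ x y, x ≠ y → 0 ≤ W x y)
    (hconn : (weightGraph W).Preconnected) {u : V → ℝ} (hu : u ∈ meanZero μ) (hu₀ : u ≠ 0) :
    0 < intV μ (gradSq μ W u) := by
  refine (intV_gradSq_nonneg (fun x => (hμ x).le) hW u).lt_of_ne' fun hzero => hu₀ ?_
  ext x
  have : Nonempty V := ⟨x⟩
  have hconst : u = fun _ => u x :=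
    funext fun y => eq_of_intV_gradSq_eq_zero (fun x => (hμ x).ne') hW hconn hzero y x
  have hmean : volV μ * u x = 0 := by rw [← intV_const, ← hconst, mem_meanZero.1 hu]
  exact (mul_eq_zero.1 hmean).resolve_left (volV_pos hμ).ne'

theorem continuous_intV_gradSq (μ : V → ℝ) (W : V → V → ℝ) :
    Continuous fun u => intV μ (gradSq μ W u) := by
  unfold intV gradSq gradForm
  fun_prop

theorem exists_pos_forall_mul_norm_sq_le_intV_gradSq (hμ : ∀ x, 0 < μ x)
    (hW : ∀ x y, x ≠ y → 0 ≤ W x y) (hconn : (weightGraph W).Preconnected) :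
    ∃ c > 0, ∀ u : meanZero μ, c * ‖u‖ ^ 2 ≤ intV μ (gradSq μ W u) :=
  exists_pos_forall_mul_norm_sq_le ((continuous_intV_gradSq μ W).comp continuous_subtype_val)
    (fun r u => intV_gradSq_smul μ W r u)
    fun u hu => intV_gradSq_pos hμ hW hconn u.2 (by simpa using hu)

end Energy

section ExponentialIntegral

variable [Fintype V] {μ h : V → ℝ}

theorem intV_mul_exp_pos (hμ : ∀ x, 0 < μ x) (hh : 0 < h) (u : V → ℝ) :
    0 < intV μ fun x => h x * exp (u x) := by
  obtain ⟨hh₀, x, hx⟩ := Pi.lt_def.1 hh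
  exact intV_pos hμ <| Pi.lt_def.2
    ⟨fun y => mul_nonneg (hh₀ y) (exp_pos _).le, x, mul_pos hx (exp_pos _)⟩

theorem lipschitzWith_log_intV_mul_exp (hμ : ∀ x, 0 < μ x) (hh : 0 < h) :
    LipschitzWith 1 fun u : V → ℝ => log (intV μ fun x => h x * exp (u x)) := by
  refine LipschitzWith.of_le_add fun u v => ?_
  have hpoint (x : V) : h x * exp (u x) ≤ exp (dist u v) * (h x * exp (v x)) := by
    have hx : u x ≤ dist u v + v x :=
      sub_le_iff_le_add.1 ((le_abs_self _).trans (dist_le_pi_dist u v x))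
    calc h x * exp (u x) ≤ h x * exp (dist u v + v x) :=
          mul_le_mul_of_nonneg_left (exp_le_exp.2 hx) (hh.le x)
      _ = exp (dist u v) * (h x * exp (v x)) := by rw [exp_add]; ring
  calc log (intV μ fun x => h x * exp (u x))
      ≤ log (intV μ (exp (dist u v) • fun x => h x * exp (v x))) :=
        log_le_log (intV_mul_exp_pos hμ hh u) (intV_mono (fun x => (hμ x).le) hpoint)
    _ = log (exp (dist u v) * intV μ fun x => h x * exp (v x)) := by
        rw [intV_smul]
    _ = log (intV μ fun x => h x * exp (v x)) + dist u v := by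
        rw [log_mul (exp_ne_zero _) (intV_mul_exp_pos hμ hh v).ne', log_exp, add_comm]

theorem abs_log_intV_mul_exp_le (hμ : ∀ x, 0 < μ x) (hh : 0 < h) (u : V → ℝ) :
    |log (intV μ fun x => h x * exp (u x))| ≤ |log (intV μ h)| + ‖u‖ := by
  have hdist := (lipschitzWith_log_intV_mul_exp hμ hh).dist_le_mul u 0
  simp only [Pi.zero_apply, exp_zero, mul_one, NNReal.coe_one, one_mul, dist_zero_right,
    Real.dist_eq] at hdist
  linarith [abs_sub_abs_le_abs_sub (log (intV μ fun x => h x * exp (u x))) (log (intV μ h))]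

end ExponentialIntegral

section Minimizer

variable [Fintype V] [DecidableEq V] {μ h : V → ℝ} {W : V → V → ℝ}

theorem continuous_Jrho (hμ : ∀ x, 0 < μ x) (W : V → V → ℝ) (hh : 0 < h) (ρ : ℝ) :
    Continuous (Jrho μ W h ρ) :=
  ((continuous_intV_gradSq μ W).const_mul _).sub
    ((lipschitzWith_log_intV_mul_exp hμ hh).continuous.const_mul ρ)

theorem tendsto_Jrho_cocompact_atTop (hμ : ∀ x, 0 < μ x) (hW : ∀ x y, x ≠ y → 0 ≤ W x y)
    (hconn : (weightGraph W).Preconnected) (hh : 0 < h) (ρ : ℝ) :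
    Tendsto (fun u : meanZero μ => Jrho μ W h ρ u) (cocompact (meanZero μ)) atTop := by
  obtain ⟨c, hc, henergy⟩ := exists_pos_forall_mul_norm_sq_le_intV_gradSq hμ hW hconn
  have hlower (u : meanZero μ) :
      ‖u‖ * (c / 2 * ‖u‖ - |ρ|) - |ρ| * |log (intV μ h)| ≤ Jrho μ W h ρ u := by
    have hlog : ρ * log (intV μ fun x => h x * exp (u.1 x)) ≤ |ρ| * (|log (intV μ h)| + ‖u‖) := by
      refine (le_abs_self _).trans ?_
      rw [abs_mul]
      exact mul_le_mul_of_nonneg_left (abs_log_intV_mul_exp_le hμ hh u.1) (abs_nonneg ρ)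
    rw [Jrho]
    linarith [henergy u]
  have hquadratic : Tendsto (fun t : ℝ => t * (c / 2 * t - |ρ|)) atTop atTop :=
    tendsto_id.atTop_mul_atTop₀
      (tendsto_atTop_add_const_right _ _ (tendsto_id.const_mul_atTop (half_pos hc)))
  exact tendsto_atTop_mono hlower <| tendsto_atTop_add_const_right _ _ <|
    hquadratic.comp (tendsto_norm_cocompact_atTop (E := meanZero μ))

theorem exists_isMinOn_Jrho (hμ : ∀ x, 0 < μ x) (hW : ∀ x y, x ≠ y → 0 ≤ W x y)
    (hconn : (weightGraph W).Preconnected) (hh : 0 < h) (ρ : ℝ) :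
    ∃ u ∈ meanZero μ, IsMinOn (Jrho μ W h ρ) (meanZero μ) u := by
  obtain ⟨u, hu⟩ := ((continuous_Jrho hμ W hh ρ).comp continuous_subtype_val).exists_forall_le
    (tendsto_Jrho_cocompact_atTop hμ hW hconn hh ρ)
  exact ⟨u, u.2, fun w hw => hu ⟨w, hw⟩⟩

end Minimizer

theorem hasDerivAt_add_smul_apply (u v : V → ℝ) (x : V) :
    HasDerivAt (fun t : ℝ => (u + t • v) x) (v x) 0 := by
  simpa using ((hasDerivAt_id (0 : ℝ)).mul_const (v x)).const_add (u x)

section EulerLagrange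

variable [Fintype V] {μ h : V → ℝ}

theorem hasDerivAt_log_intV_mul_exp (u v : V → ℝ) (hZ : intV μ (fun x => h x * exp (u x)) ≠ 0) :
    HasDerivAt (fun t : ℝ => log (intV μ fun x => h x * exp ((u + t • v) x)))
      (intV μ (fun x => h x * exp (u x) * v x) / intV μ fun x => h x * exp (u x)) 0 := by
  have hZ' : HasDerivAt (fun t : ℝ => intV μ fun x => h x * exp ((u + t • v) x))
      (intV μ fun x => h x * exp (u x) * v x) 0 := by
    refine HasDerivAt.fun_sum fun x _ => ?_
    simpa [mul_assoc] using
      ((hasDerivAt_add_smul_apply u v x).exp.const_mul (h x)).const_mul (μ x)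
  simpa using hZ'.log (by simpa using hZ)

variable [DecidableEq V] {W : V → V → ℝ}

theorem hasDerivAt_intV_gradSq (μ : V → ℝ) (W : V → V → ℝ) (u v : V → ℝ) :
    HasDerivAt (fun t : ℝ => intV μ (gradSq μ W (u + t • v)))
      (2 * intV μ (gradForm μ W u v)) 0 := by
  simp only [intV, gradSq, gradForm, mul_sum]
  refine HasDerivAt.fun_sum fun x _ => HasDerivAt.fun_sum fun y _ => ?_
  have hdiff := (hasDerivAt_add_smul_apply u v x).sub (hasDerivAt_add_smul_apply u v y)
  refine ((((hdiff.const_mul (W x y)).mul hdiff).const_mul _).const_mul _).congr_deriv ?_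
  simp only [Pi.add_apply, Pi.smul_apply, smul_eq_mul, Pi.sub_apply, zero_mul, add_zero]
  ring

theorem hasDerivAt_Jrho (W : V → V → ℝ) (ρ : ℝ) (u v : V → ℝ)
    (hZ : intV μ (fun x => h x * exp (u x)) ≠ 0) :
    HasDerivAt (fun t : ℝ => Jrho μ W h ρ (u + t • v))
      (intV μ (gradForm μ W u v) -
        ρ * (intV μ (fun x => h x * exp (u x) * v x) / intV μ fun x => h x * exp (u x))) 0 :=
  (((hasDerivAt_intV_gradSq μ W u v).const_mul (1 / 2)).sub
    ((hasDerivAt_log_intV_mul_exp u v hZ).const_mul ρ)).congr_deriv (by ring)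

theorem intV_gradForm_eq_of_isMinOn {ρ : ℝ} {u v : V → ℝ}
    (hu : u ∈ meanZero μ) (hmin : IsMinOn (Jrho μ W h ρ) (meanZero μ) u) (hv : v ∈ meanZero μ)
    (hZ : intV μ (fun x => h x * exp (u x)) ≠ 0) :
    intV μ (gradForm μ W u v) =
      ρ * (intV μ (fun x => h x * exp (u x) * v x) / intV μ fun x => h x * exp (u x)) := by
  have hline : IsLocalMin (fun t : ℝ => Jrho μ W h ρ (u + t • v)) 0 := by
    refine Eventually.of_forall fun t => ?_
    simpa using hmin ((meanZero μ).add_mem hu ((meanZero μ).smul_mem t hv))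
  exact sub_eq_zero.1 (hline.hasDerivAt_eq_zero (hasDerivAt_Jrho W ρ u v hZ))

theorem opL_eq_of_isMinOn (hμ : ∀ x, 0 < μ x) (hW : ∀ x y, W x y = W y x) {ρ : ℝ} {u : V → ℝ}
    (hu : u ∈ meanZero μ) (hmin : IsMinOn (Jrho μ W h ρ) (meanZero μ) u)
    (hZ : intV μ (fun x => h x * exp (u x)) ≠ 0) (x : V) :
    opL μ W u x =
      ρ * (h x * exp (u x) / intV μ (fun y => h y * exp (u y)) - 1 / volV μ) := by
  have hμ₀ (x : V) : μ x ≠ 0 := (hμ x).ne'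
  set Z := intV μ fun y => h y * exp (u y) with hZdef
  set f : V → ℝ := opL μ W u - (ρ / Z) • fun y => h y * exp (u y) with hf
  have hf_orth (v : V → ℝ) (hv : v ∈ meanZero μ) : intV μ (f * v) = 0 := by
    rw [hf, sub_mul, smul_mul_assoc, intV_sub, intV_smul,
      ← intV_gradForm_eq_intV_opL_mul hμ₀ hW, intV_gradForm_eq_of_isMinOn hu hmin hv hZ, ← hZdef]
    simp only [Pi.mul_def]
    ring
  have hf_mean : intV μ f = -ρ := by
    rw [hf, intV_sub, intV_smul, intV_opL hμ₀ hW, ← hZdef, div_mul_cancel₀ ρ hZ, zero_sub]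
  have hfx := eq_mean_of_forall_intV_mul_eq_zero hμ hf_orth x
  rw [hf_mean, hf, Pi.sub_apply, Pi.smul_apply, smul_eq_mul] at hfx
  linear_combination hfx

end EulerLagrange

/-- In the pointwise order, `0 < h` says that `h ≥ 0` and `h` is not identically zero. -/
theorem Jrho_minimizer_solves_general [Fintype V] [DecidableEq V]
    {μ : V → ℝ} {W : V → V → ℝ} (hμ : ∀ x, 0 < μ x) (hWsym : ∀ x y, W x y = W y x)
    (hW : ∀ x y, x ≠ y → 0 ≤ W x y) (hconn : (weightGraph W).Preconnected)
    {h : V → ℝ} (hh : 0 < h) (ρ : ℝ) :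
    ∃ u : V → ℝ, intV μ u = 0 ∧
      (∀ w : V → ℝ, intV μ w = 0 → Jrho μ W h ρ u ≤ Jrho μ W h ρ w) ∧
      (∀ x : V, opL μ W u x =
        ρ * (h x * exp (u x) / intV μ (fun y => h y * exp (u y)) - 1 / volV μ)) := by
  obtain ⟨u, hu, hmin⟩ := exists_isMinOn_Jrho hμ hW hconn hh ρ
  exact ⟨u, hu, fun w hw => hmin hw,
    opL_eq_of_isMinOn hμ hWsym hu hmin (intV_mul_exp_pos hμ hh u).ne'⟩

/-- For positive `h` and `ρ ≠ 0`, `J_ρ` attains its infimum over the mean-zero subspace at some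
`u`, and this minimizer solves the fractional mean field equation. -/
theorem Jrho_minimizer_solves [Fintype V] [Nonempty V] [DecidableEq V]
    (μ : V → ℝ) (W : V → V → ℝ)
    (hμ : ∀ x, 0 < μ x)
    (hWsym : ∀ x y, W x y = W y x)
    (hWpos : ∀ x y, x ≠ y → 0 < W x y)
    (h : V → ℝ) (hh : ∀ x, 0 < h x)
    (ρ : ℝ) (hρ : ρ ≠ 0) :
    ∃ u : V → ℝ, intV μ u = 0 ∧
      (∀ w : V → ℝ, intV μ w = 0 → Jrho μ W h ρ u ≤ Jrho μ W h ρ w) ∧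
      (∀ x : V, opL μ W u x =
        ρ * (h x * Real.exp (u x) / intV μ (fun y => h y * Real.exp (u y)) - 1 / volV μ)) :=
  Jrho_minimizer_solves_general hμ hWsym (fun x y hxy => (hWpos x y hxy).le)
    (weightGraph_eq_top hWpos ▸ SimpleGraph.preconnected_top) (StrongLT.lt hh) ρ
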